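/- Let α_1, …, α_n be distinct elements of F_q, set g(x) = ∏_{i=1}^n (x−α_i) and z = dg/dx. Let a, b ∈ F_q[x] be coprime polynomials with deg a + deg b = n such that a(α_i) ≠ 0 and b(α_i) ≠ 0 for all i, and suppose that a(α_i)·b(α_i)·z(α_i) is a nonzero square in F_q for every i. Choose u_1, …, u_n ∈ F_q with u_i ≠ 0 and u_i^2 · b(α_i) · z(α_i) = a(α_i) for each i. Then C = {(u_1 h(α_1), …, u_n h(α_n)) : h ∈ F_q[x], deg h ≤ n−1−deg a} is an [n, n−deg a] LCD MDS code over F_q. -/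

import Mathlib

/-!
The code is the image of the polynomials of degree `< k`, `k = n - deg a = deg b`, under the
evaluation map `h ↦ (u i * h (α i))`. A polynomial of degree `< k` has fewer than `k` zeros among
the distinct nodes, which gives both the dimension and the weight bound.

For the LCD property, let `h` give a codeword orthogonal to the code and let `w` be the polynomial
of degree `< n` interpolating `h * a / b` at the nodes. Since `u i ^ 2 = a / (b z)` at `α i`,
orthogonality says `∑ i, w (α i) * f (α i) / z (α i) = 0` for every `f` of degree `< k`, and by
Lagrange interpolation this sum is the coefficient of `X ^ (n - 1)` in `w * f` whenever
`deg (w * f) < n`. Taking for `f` powers of `X` forces `deg w < n - k = deg a`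
(`degree_lt_of_sum_eq_zero`). Then `w * b` and `h * a` both have degree `< n` and agree at the `n`
nodes, so they are equal; coprimality gives `b ∣ h`, and `deg h < deg b` gives `h = 0`.
-/


open Polynomial

/-- `C` is an `[n, k]` LCD MDS code over the field `F`: it is a `k`-dimensional
linear subspace of `F^n`, it intersects its Euclidean dual trivially, and every
nonzero codeword has Hamming weight at least `n - k + 1`. -/
def IsLCDMDSCode {F : Type} [Field F] [DecidableEq F] {n : ℕ} (k : ℕ)
    (C : Submodule F (Fin n → F)) : Prop :=
  Module.finrank F C = k ∧
  (∀ x ∈ C, (∀ c ∈ C, ∑ i, x i * c i = 0) → x = 0) ∧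
  (∀ x ∈ C, x ≠ 0 → n - k + 1 ≤ (Finset.univ.filter fun i => x i ≠ 0).card)

/-- The evaluation map `h ↦ (u i * h (α i))_i` on polynomials of degree less than `k`; its range
is the generalized Reed–Solomon code with nodes `α` and column multipliers `u`. -/
noncomputable def grsMap {F : Type} [Field F] {n : ℕ} (α u : Fin n → F) (k : ℕ) :
    degreeLT F k →ₗ[F] (Fin n → F) where
  toFun h i := u i * (h : F[X]).eval (α i)
  map_add' h₁ h₂ := by
    ext i
    simp [mul_add]
  map_smul' c h := by
    ext i
    simp [mul_left_comm]

/-- The dual of a generalized Reed–Solomon code is again of that type: if the values of `w`,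
weighted by the inverses of the derivative of `∏ i, (X - α i)`, are orthogonal to all polynomials of degree `< k`, then
`deg w < n - k`. -/
theorem degree_lt_of_sum_eq_zero {F : Type} [Field F] {n r k : ℕ} (hrk : r + k = n)
    (α : Fin n → F) (hα : Function.Injective α) (w : F[X]) (hw : w.degree < n)
    (horth : ∀ f : F[X], f.degree < k →
      ∑ i, (w * f).eval (α i) / (derivative (∏ i, (X - C (α i)))).eval (α i) = 0) :
    w.degree < r := by
  by_contra! hlt
  have hw0 : w ≠ 0 := by
    rintro rfl
    simp at hlt
  rw [degree_eq_natDegree hw0] at hw hlt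
  have hwn : w.natDegree < n := by exact_mod_cast hw
  have hrw : r ≤ w.natDegree := by exact_mod_cast hlt
  -- This exponent brings the degree of the product up to exactly `n - 1`.
  have hdeg : (w * X ^ (n - 1 - w.natDegree)).natDegree = n - 1 := by
    rw [natDegree_mul_X_pow _ hw0]
    omega
  have h1 := horth (X ^ (n - 1 - w.natDegree)) (by
    rw [degree_X_pow]
    exact_mod_cast (by omega : n - 1 - w.natDegree < k))
  have hne : w * X ^ (n - 1 - w.natDegree) ≠ 0 := mul_ne_zero hw0 (pow_ne_zero _ X_ne_zero)
  have h2 := Lagrange.coeff_eq_sum (s := Finset.univ) (v := α) hα.injOn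
    (P := w * X ^ (n - 1 - w.natDegree)) (by
      rw [degree_eq_natDegree hne, hdeg, Finset.card_univ, Fintype.card_fin]
      exact_mod_cast (by omega : n - 1 < n))
  rw [Finset.card_univ, Fintype.card_fin] at h2
  refine leadingCoeff_ne_zero.mpr hne ?_
  rw [leadingCoeff, hdeg, h2, ← h1]
  refine Finset.sum_congr rfl fun i hi => ?_
  congr 1
  rw [← Lagrange.nodal_eq, Lagrange.eval_nodal_derivative_eval_node_eq hi, Lagrange.eval_nodal]

theorem stmt12 (F : Type) [Field F] [Fintype F] [DecidableEq F] (n : ℕ)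
    (α : Fin n → F) (hα : Function.Injective α)
    (z : F[X]) (hz : z = derivative (∏ i, (X - C (α i))))
    (a b : F[X]) (hab : IsCoprime a b)
    (hdeg : a.natDegree + b.natDegree = n)
    (haα : ∀ i, a.eval (α i) ≠ 0) (hbα : ∀ i, b.eval (α i) ≠ 0)
    (hsq : ∀ i, ∃ θ : F, θ ≠ 0 ∧ a.eval (α i) * b.eval (α i) * z.eval (α i) = θ ^ 2)
    (u : Fin n → F) (hu : ∀ i, u i ≠ 0)
    (huz : ∀ i, u i ^ 2 * b.eval (α i) * z.eval (α i) = a.eval (α i)) :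
    ∃ Cd : Submodule F (Fin n → F),
      (Cd : Set (Fin n → F)) =
        {c | ∃ h : F[X], h.degree < ((n - a.natDegree : ℕ) : WithBot ℕ) ∧
             c = fun i => u i * h.eval (α i)} ∧
      IsLCDMDSCode (n - a.natDegree) Cd := by
  have hk : n - a.natDegree = b.natDegree := by omega
  rw [hk]
  have hbn : b.natDegree ≤ n := by omega
  refine ⟨LinearMap.range (grsMap α u b.natDegree), ?_, ?_, ?_, ?_⟩
  · ext c
    simp only [SetLike.mem_coe, LinearMap.mem_range, Set.mem_ofPred_eq]
    constructor
    · rintro ⟨h, rfl⟩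
      exact ⟨h, mem_degreeLT.mp h.2, rfl⟩
    · rintro ⟨h, hh, rfl⟩
      exact ⟨⟨h, mem_degreeLT.mpr hh⟩, rfl⟩
  · have hinj : Function.Injective (grsMap α u b.natDegree) := by
      rw [← LinearMap.ker_eq_bot, LinearMap.ker_eq_bot']
      intro h hh
      apply Subtype.ext
      refine eq_zero_of_degree_lt_of_eval_index_eq_zero Finset.univ hα.injOn ?_ fun i _ => ?_
      · rw [Finset.card_univ, Fintype.card_fin]
        exact (mem_degreeLT.mp h.2).trans_le (by exact_mod_cast hbn)
      · exact (mul_eq_zero.mp (congrFun hh i)).resolve_left (hu i)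
    rw [LinearMap.finrank_range_of_inj hinj, (degreeLTEquiv F b.natDegree).finrank_eq,
      Module.finrank_fin_fun]
  · rintro x ⟨⟨h, hmem⟩, rfl⟩ horth
    have hh := mem_degreeLT.mp hmem
    suffices h0 : h = 0 by
      subst h0
      exact map_zero (grsMap α u b.natDegree)
    -- Without nodes nothing prevents `a` or `b` from vanishing, but then `deg h < 0`.
    rcases Nat.eq_zero_or_pos n with hn | hn
    · have hb : b.natDegree = 0 := by omega
      rw [hb] at hh
      exact degree_eq_bot.mp (Nat.WithBot.lt_zero_iff.mp hh)
    have ha0 : a ≠ 0 := fun h0 => haα ⟨0, hn⟩ (by rw [h0, eval_zero])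
    have hb0 : b ≠ 0 := fun h0 => hbα ⟨0, hn⟩ (by rw [h0, eval_zero])
    have hz0 : ∀ i, z.eval (α i) ≠ 0 := fun i hi => haα i (by rw [← huz i, hi, mul_zero])
    let w := Lagrange.interpolate Finset.univ α
      fun i => h.eval (α i) * a.eval (α i) / b.eval (α i)
    have hwe : ∀ i, w.eval (α i) = h.eval (α i) * a.eval (α i) / b.eval (α i) := fun i =>
      Lagrange.eval_interpolate_at_node _ hα.injOn (Finset.mem_univ i)
    have hwn : w.degree < n := by
      have hlt := Lagrange.degree_interpolate_lt (s := Finset.univ) (v := α)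
        (fun i => h.eval (α i) * a.eval (α i) / b.eval (α i)) hα.injOn
      rwa [Finset.card_univ, Fintype.card_fin] at hlt
    have hwa : w.degree < a.natDegree := by
      refine degree_lt_of_sum_eq_zero hdeg α hα w hwn fun f hf => ?_
      rw [← horth _ ⟨⟨f, mem_degreeLT.mpr hf⟩, rfl⟩]
      refine Finset.sum_congr rfl fun i _ => ?_
      change _ = u i * h.eval (α i) * (u i * f.eval (α i))
      rw [← hz, eval_mul, hwe, ← huz i]
      have := hz0 i
      have := hbα i
      field_simp
    have heq : w * b = h * a := by
      refine eq_of_degrees_lt_of_eval_index_eq Finset.univ hα.injOn ?_ ?_ fun i _ => ?_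
      · rw [Finset.card_univ, Fintype.card_fin, ← hdeg, degree_mul, Nat.cast_add]
        exact WithBot.add_lt_add_of_lt_of_le (by simpa using hb0) hwa degree_le_natDegree
      · rw [Finset.card_univ, Fintype.card_fin, ← hdeg, degree_mul, Nat.cast_add, add_comm]
        exact WithBot.add_lt_add_of_le_of_lt (by simpa using ha0) degree_le_natDegree hh
      · rw [eval_mul, eval_mul, hwe, div_mul_cancel₀ _ (hbα i)]
    have hdvd : b ∣ h := hab.symm.dvd_of_dvd_mul_right ⟨w, by rw [← heq, mul_comm]⟩
    by_contra hne
    rw [degree_eq_natDegree hne] at hh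
    exact absurd (natDegree_le_of_dvd hdvd hne) (not_le.mpr (by exact_mod_cast hh))
  · rintro x ⟨⟨h, hmem⟩, rfl⟩ hx
    have hh := mem_degreeLT.mp hmem
    have hzeros : (Finset.univ.filter fun i => h.eval (α i) = 0).card < b.natDegree := by
      by_contra! hle
      refine hx ?_
      have h0 : h = 0 := eq_zero_of_degree_lt_of_eval_index_eq_zero _ hα.injOn
        (hh.trans_le (by exact_mod_cast hle)) fun i hi => (Finset.mem_filter.mp hi).2
      subst h0
      exact map_zero (grsMap α u b.natDegree)
    have hsupp : (Finset.univ.filter fun i => grsMap α u b.natDegree ⟨h, hmem⟩ i ≠ 0) =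
        Finset.univ.filter fun i => ¬ h.eval (α i) = 0 := by
      refine Finset.filter_congr fun i _ => ?_
      change u i * h.eval (α i) ≠ 0 ↔ _
      simp [hu i]
    have hcard := Finset.card_filter_add_card_filter_not (s := (Finset.univ : Finset (Fin n)))
      (fun i => h.eval (α i) = 0)
    rw [Finset.card_univ, Fintype.card_fin] at hcard
    rw [hsupp]
    omega
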